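/- Let n be a positive integer and let B be an n×n real matrix all of whose entries lie in the interval [0,1]. Then the largest singular value of B is at most n. Moreover, let K, d be positive integers, let μ, ν ∈ ℝ^{K×d} and γ > 0 be such that every eigenvalue of μᵀμ and every eigenvalue of νᵀν is at least γ, let τ : {1,…,n} → {1,…,K}, let α > 0 be such that |τ⁻¹(k)| ≥ αn for every k, and let X, Y ∈ ℝ^{n×d} be defined by X_{i,·} = μ_{τ(i),·} and Y_{i,·} = ν_{τ(i),·}. Then the d-th largest singular value of XYᵀ is at least αγn. -/

import Mathlib

open Matrix

/-- The eigenvalues of a Hermitian (real symmetric) matrix, listed in nonincreasing order: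
`eigsDesc hA k` is the `(k+1)`-st largest eigenvalue of `A`. -/
noncomputable def eigsDesc {n : ℕ} {A : Matrix (Fin n) (Fin n) ℝ} (hA : A.IsHermitian) :
    Fin n → ℝ :=
  fun k => hA.eigenvalues (Tuple.sort hA.eigenvalues k.rev)

/-- `svalue A k` is the `(k+1)`-st largest singular value of the real square matrix `A`
(so `svalue A 0` is the largest singular value), defined as the square root of the
`(k+1)`-st largest eigenvalue of `A * Aᴴ`; it is `0` if `k ≥ n`. -/
noncomputable def svalue {n : ℕ} (A : Matrix (Fin n) (Fin n) ℝ) (k : ℕ) : ℝ :=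
  if h : k < n then
    Real.sqrt (eigsDesc (Matrix.isHermitian_mul_conjTranspose_self A) ⟨k, h⟩)
  else 0

/-!
The squared singular values of `B` sum to the trace of `B * Bᴴ`, which is the sum of the squares of
the entries of `B` and hence at most `n ^ 2`.

For the lower bound, `Xᴴ * X = μᴴ * D * μ` with `D` the diagonal matrix of block sizes, so in the
Loewner order `Xᴴ * X ≥ α * n • μᴴ * μ ≥ α * γ * n • 1`, and likewise for `Y`. Write `c` for
`α * γ * n`, `G` for `Xᴴ * X` and `A` for `X * Yᴴ * (X * Yᴴ)ᴴ`. Then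
`Xᴴ * A * X = G * (Yᴴ * Y) * G ≥ c • G * G ≥ c ^ 2 • G`, that is, the quadratic form of
`A - c ^ 2 • 1` is nonnegative on the column space of `X`. This space has dimension `d`, so `A` has
at least `d` eigenvalues `≥ c ^ 2`.
-/

section Loewner

open scoped ComplexOrder Finset MatrixOrder

theorem real_smul_one_eq_diagonal {ι 𝕜 : Type*} [RCLike 𝕜] [DecidableEq ι] (c : ℝ) :
    c • (1 : Matrix ι ι 𝕜) = diagonal fun _ => (c : 𝕜) := by
  rw [← diagonal_one, ← diagonal_smul]
  simp only [Pi.smul_def, RCLike.real_smul_eq_coe_mul, mul_one]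

theorem conjTranspose_submatrix_mul_submatrix {R ι κ δ : Type*} [CommSemiring R] [Star R]
    [Fintype ι] [Fintype κ] [DecidableEq κ] (M : Matrix κ δ R) (τ : ι → κ) :
    (M.submatrix τ id)ᴴ * M.submatrix τ id =
      Mᴴ * diagonal (fun k => (#{i | τ i = k} : R)) * M := by
  ext p q
  simp only [mul_apply (N := M), mul_apply (M := (M.submatrix τ id)ᴴ), mul_diagonal,
    conjTranspose_apply, submatrix_apply, id]
  rw [← Finset.sum_fiberwise Finset.univ τ]
  refine Finset.sum_congr rfl fun k _ => ?_
  have hconst : ∀ i ∈ ({i | τ i = k} : Finset ι),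
      star (M (τ i) p) * M (τ i) q = star (M k p) * M k q := by
    simp +contextual
  rw [Finset.sum_congr rfl hconst, Finset.sum_const, nsmul_eq_mul]
  ring

theorem conjTranspose_mul_mul_le_conjTranspose_mul_mul {𝕜 ι κ : Type*} [RCLike 𝕜]
    [Fintype ι] [Finite κ] {A B : Matrix ι ι 𝕜} (h : A ≤ B) (P : Matrix ι κ 𝕜) :
    Pᴴ * A * P ≤ Pᴴ * B * P := by
  simpa only [le_iff, Matrix.mul_sub, Matrix.sub_mul] using h.conjTranspose_mul_mul_same P

theorem smul_conjTranspose_mul_self_le_submatrix {𝕜 ι κ δ : Type*} [RCLike 𝕜] [Fintype ι]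
    [Fintype κ] [Finite δ] [DecidableEq κ] (M : Matrix κ δ 𝕜) {τ : ι → κ} {m : ℝ}
    (hτ : ∀ k, m ≤ #{i | τ i = k}) :
    m • (Mᴴ * M) ≤ (M.submatrix τ id)ᴴ * M.submatrix τ id := by
  have hdiag : m • (1 : Matrix κ κ 𝕜) ≤ diagonal (fun k => (#{i | τ i = k} : 𝕜)) := by
    rw [real_smul_one_eq_diagonal, le_iff, diagonal_sub, posSemidef_diagonal_iff]
    exact fun k => sub_nonneg.2 (by exact_mod_cast RCLike.ofReal_le_ofReal (K := 𝕜).2 (hτ k))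
  rw [conjTranspose_submatrix_mul_submatrix]
  simpa using conjTranspose_mul_mul_le_conjTranspose_mul_mul hdiag M

variable {𝕜 ι ι' κ : Type*} [RCLike 𝕜] [Fintype ι] [Fintype ι'] [Fintype κ]

theorem smul_one_le_of_forall_eigenvalue_le [DecidableEq ι] {A : Matrix ι ι 𝕜}
    (hA : A.IsHermitian) {c : ℝ}
    (h : ∀ (lam : ℝ) (v : ι → 𝕜), v ≠ 0 → A *ᵥ v = lam • v → c ≤ lam) :
    c • (1 : Matrix ι ι 𝕜) ≤ A := by
  rw [← Algebra.algebraMap_eq_smul_one, algebraMap_le_iff_le_spectrum (ha := hA.isSelfAdjoint),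
    hA.spectrum_real_eq_range_eigenvalues]
  rintro _ ⟨i, rfl⟩
  have hne := hA.eigenvectorBasis.orthonormal.ne_zero i
  exact h _ _ (fun h0 => hne (WithLp.ofLp_injective 2 h0)) (hA.mulVec_eigenvectorBasis i)

theorem smul_le_mul_self_of_smul_one_le [DecidableEq ι] {G : Matrix ι ι 𝕜} {c : ℝ} (hc : 0 ≤ c)
    (hG : c • 1 ≤ G) : c • G ≤ G * G := by
  have hG' : 0 ≤ G - c • 1 := sub_nonneg.2 hG
  have hsq : 0 ≤ (G - c • 1) * (G - c • 1) := (Commute.refl _).mul_nonneg hG' hG'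
  rw [← sub_nonneg]
  calc 0 ≤ (G - c • 1) * (G - c • 1) + c • (G - c • 1) := add_nonneg hsq (smul_nonneg hc hG')
    _ = G * G - c • G := by
      simp only [Matrix.mul_sub, Matrix.sub_mul, smul_sub, Matrix.smul_mul, Matrix.mul_smul,
        Matrix.one_mul, Matrix.mul_one]
      abel

theorem mulVec_injective_of_smul_one_le_conjTranspose_mul_self [DecidableEq κ]
    {X : Matrix ι κ 𝕜} {c : ℝ} (hc : 0 < c) (hX : c • 1 ≤ Xᴴ * X) :
    Function.Injective X.mulVec := by
  have hdef : (Xᴴ * X).PosDef := by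
    simpa only [add_sub_cancel] using (PosDef.one.smul hc).add_posSemidef hX
  have hinj : Function.Injective (Xᴴ.mulVec ∘ X.mulVec) := by
    simpa only [Function.comp_def, mulVec_mulVec] using mulVec_injective_of_isUnit hdef.isUnit
  exact hinj.of_comp

theorem smul_conjTranspose_mul_self_le [DecidableEq κ] {X : Matrix ι κ 𝕜} {Y : Matrix ι' κ 𝕜}
    {a b : ℝ} (ha : 0 ≤ a) (hb : 0 ≤ b) (hX : a • 1 ≤ Xᴴ * X) (hY : b • 1 ≤ Yᴴ * Y) :
    (a * b) • (Xᴴ * X) ≤ Xᴴ * (X * Yᴴ * (X * Yᴴ)ᴴ) * X := by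
  calc (a * b) • (Xᴴ * X) = b • a • (Xᴴ * X) := by rw [mul_comm, mul_smul]
    _ ≤ b • (Xᴴ * X * (Xᴴ * X)) :=
      smul_le_smul_of_nonneg_left (smul_le_mul_self_of_smul_one_le ha hX) hb
    _ = (Xᴴ * X)ᴴ * (b • 1) * (Xᴴ * X) := by simp
    _ ≤ (Xᴴ * X)ᴴ * (Yᴴ * Y) * (Xᴴ * X) := conjTranspose_mul_mul_le_conjTranspose_mul_mul hY _
    _ = Xᴴ * (X * Yᴴ * (X * Yᴴ)ᴴ) * X := by
      simp only [conjTranspose_mul, conjTranspose_conjTranspose, Matrix.mul_assoc]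

theorem smul_one_le_conjTranspose_mul_self_of_row_eq [DecidableEq ι] [DecidableEq κ]
    {μ : Matrix κ ι 𝕜} {X : Matrix ι' ι 𝕜} {τ : ι' → κ} {m γ : ℝ} (hm : 0 ≤ m)
    (hμ : ∀ (lam : ℝ) (v : ι → 𝕜), v ≠ 0 → (μᴴ * μ) *ᵥ v = lam • v → γ ≤ lam)
    (hτ : ∀ k, m ≤ #{i | τ i = k}) (hX : ∀ i, X i = μ (τ i)) :
    (m * γ) • 1 ≤ Xᴴ * X := by
  obtain rfl : X = μ.submatrix τ id := funext hX
  calc (m * γ) • (1 : Matrix ι ι 𝕜) = m • γ • 1 := mul_smul ..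
    _ ≤ m • (μᴴ * μ) := smul_le_smul_of_nonneg_left
        (smul_one_le_of_forall_eigenvalue_le (isHermitian_conjTranspose_mul_self μ) hμ) hm
    _ ≤ (μ.submatrix τ id)ᴴ * μ.submatrix τ id := smul_conjTranspose_mul_self_le_submatrix μ hτ

theorem star_dotProduct_conjTranspose_mul_diagonal_mul_mulVec [DecidableEq ι] (w : ι → ℝ)
    (Q : Matrix ι κ 𝕜) (x : κ → 𝕜) :
    star x ⬝ᵥ ((Qᴴ * diagonal (fun i => (w i : 𝕜)) * Q) *ᵥ x) =
      ((∑ i, w i * ‖(Q *ᵥ x) i‖ ^ 2 : ℝ) : 𝕜) := by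
  rw [Matrix.mul_assoc, ← mulVec_mulVec, dotProduct_mulVec, ← star_mulVec, ← mulVec_mulVec]
  simp only [dotProduct, mulVec_diagonal, Pi.star_apply, RCLike.star_def]
  push_cast
  refine Finset.sum_congr rfl fun i _ => ?_
  rw [← RCLike.conj_mul]
  ring

-- The coordinates of `Q *ᵥ x` at the nonnegative weights already determine `x`: if they all
-- vanish, the quadratic form is a sum of nonpositive terms, so `Q *ᵥ x = 0`.
theorem card_le_card_filter_nonneg_of_posSemidef [DecidableEq ι] {w : ι → ℝ} {Q : Matrix ι κ 𝕜}
    (hQ : Function.Injective Q.mulVec)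
    (h : (Qᴴ * diagonal (fun i => (w i : 𝕜)) * Q).PosSemidef) :
    Fintype.card κ ≤ #{i | 0 ≤ w i} := by
  let f : (κ → 𝕜) →ₗ[𝕜] ({i // 0 ≤ w i} → 𝕜) :=
    LinearMap.funLeft 𝕜 𝕜 Subtype.val ∘ₗ Q.mulVecLin
  have hf : Function.Injective f := by
    refine (injective_iff_map_eq_zero f).2 fun x hx => ?_
    have hzero : ∀ i, 0 ≤ w i → (Q *ᵥ x) i = 0 := fun i hi => congrFun hx ⟨i, hi⟩
    have hnonpos : ∀ i ∈ Finset.univ, w i * ‖(Q *ᵥ x) i‖ ^ 2 ≤ 0 := by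
      intro i _
      rcases le_or_gt 0 (w i) with hi | hi
      · simp [hzero i hi]
      · exact mul_nonpos_of_nonpos_of_nonneg hi.le (sq_nonneg _)
    have hsum : 0 ≤ ∑ i, w i * ‖(Q *ᵥ x) i‖ ^ 2 := by
      have hx0 := h.dotProduct_mulVec_nonneg x
      rwa [star_dotProduct_conjTranspose_mul_diagonal_mul_mulVec, RCLike.ofReal_nonneg] at hx0
    have hterm := (Finset.sum_eq_zero_iff_of_nonpos hnonpos).1
      (le_antisymm (Finset.sum_nonpos hnonpos) hsum)
    have hQx : Q *ᵥ x = 0 := by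
      ext i
      rcases le_or_gt 0 (w i) with hi | hi
      · exact hzero i hi
      · simpa [hi.ne] using hterm i (Finset.mem_univ i)
    exact hQ (hQx.trans (mulVec_zero Q).symm)
  simpa [Fintype.card_subtype] using LinearMap.finrank_le_finrank_of_injective hf

theorem sub_smul_one_eq_eigenvectorUnitary_mul [DecidableEq ι] {A : Matrix ι ι 𝕜}
    (hA : A.IsHermitian) (c : ℝ) :
    A - c • 1 = (hA.eigenvectorUnitary : Matrix ι ι 𝕜) *
      diagonal (fun i => ((hA.eigenvalues i - c : ℝ) : 𝕜)) *
      (hA.eigenvectorUnitary : Matrix ι ι 𝕜)ᴴ := by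
  have hone :
      (hA.eigenvectorUnitary : Matrix ι ι 𝕜) * (hA.eigenvectorUnitary : Matrix ι ι 𝕜)ᴴ = 1 :=
    Unitary.coe_mul_star_self hA.eigenvectorUnitary
  have hspec : A = (hA.eigenvectorUnitary : Matrix ι ι 𝕜) *
      diagonal (fun i => (hA.eigenvalues i : 𝕜)) * (hA.eigenvectorUnitary : Matrix ι ι 𝕜)ᴴ :=
    hA.spectral_theorem
  have hdiag : diagonal (fun i => ((hA.eigenvalues i - c : ℝ) : 𝕜)) =
      diagonal (fun i => (hA.eigenvalues i : 𝕜)) - c • 1 := by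
    simp only [real_smul_one_eq_diagonal, diagonal_sub, RCLike.ofReal_sub]
  rw [hdiag, Matrix.mul_sub, Matrix.sub_mul, ← hspec, Matrix.mul_smul, Matrix.smul_mul,
    Matrix.mul_one, hone]

theorem card_le_card_filter_le_eigenvalues [DecidableEq ι] {A : Matrix ι ι 𝕜}
    (hA : A.IsHermitian) {P : Matrix ι κ 𝕜} (hP : Function.Injective P.mulVec) {c : ℝ}
    (h : c • (Pᴴ * P) ≤ Pᴴ * A * P) :
    Fintype.card κ ≤ #{i | c ≤ hA.eigenvalues i} := by
  set U : Matrix ι ι 𝕜 := (hA.eigenvectorUnitary : Matrix ι ι 𝕜)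
  have hdiag : Pᴴ * A * P - c • (Pᴴ * P) =
      (Uᴴ * P)ᴴ * diagonal (fun i => ((hA.eigenvalues i - c : ℝ) : 𝕜)) * (Uᴴ * P) := by
    calc Pᴴ * A * P - c • (Pᴴ * P) = Pᴴ * (A - c • 1) * P := by
          simp [Matrix.mul_sub, Matrix.sub_mul]
      _ = _ := by
          simp only [sub_smul_one_eq_eigenvectorUnitary_mul hA, conjTranspose_mul,
            conjTranspose_conjTranspose, Matrix.mul_assoc, U]
  have hU : Function.Injective Uᴴ.mulVec :=
    mulVec_injective_of_isUnit (Unitary.isUnit_coe (U := star hA.eigenvectorUnitary))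
  have hUP : Function.Injective (Uᴴ * P).mulVec := by
    simpa only [Function.comp_def, mulVec_mulVec] using hU.comp hP
  rw [le_iff, hdiag] at h
  simpa only [sub_nonneg] using card_le_card_filter_nonneg_of_posSemidef hUP h

end Loewner

section SingularValues

open scoped Finset MatrixOrder

variable {n : ℕ} {A : Matrix (Fin n) (Fin n) ℝ}

theorem eigsDesc_antitone (hA : A.IsHermitian) : Antitone (eigsDesc hA) := fun _ _ hij =>
  Tuple.monotone_sort hA.eigenvalues (Fin.rev_le_rev.2 hij)

theorem le_eigsDesc_iff (hA : A.IsHermitian) {c : ℝ} {k : Fin n} :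
    c ≤ eigsDesc hA k ↔ k < #{i | c ≤ hA.eigenvalues i} := by
  have hcard : #{i | c ≤ eigsDesc hA i} = #{i | c ≤ hA.eigenvalues i} :=
    Finset.card_equiv (Fin.revPerm.trans (Tuple.sort hA.eigenvalues)) fun i => by
      simp only [Finset.mem_filter_univ]
      rfl
  rw [← hcard, Tuple.lt_card_ge_iff_apply_ge_of_antitone (eigsDesc_antitone hA)]

theorem eigsDesc_le_trace (hA : A.PosSemidef) (k : Fin n) :
    eigsDesc hA.isHermitian k ≤ A.trace := by
  rw [hA.isHermitian.trace_eq_sum_eigenvalues]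
  exact Finset.single_le_sum (f := hA.isHermitian.eigenvalues)
    (fun i _ => hA.eigenvalues_nonneg i) (Finset.mem_univ _)

theorem svalue_le_sqrt_sum_sq (A : Matrix (Fin n) (Fin n) ℝ) (k : ℕ) :
    svalue A k ≤ √(∑ i, ∑ j, A i j ^ 2) := by
  unfold svalue
  split_ifs with hk
  · have htrace : (A * Aᴴ).trace = ∑ i, ∑ j, A i j ^ 2 := by
      simp [trace, mul_apply, sq]
    rw [← htrace]
    exact Real.sqrt_le_sqrt (eigsDesc_le_trace (posSemidef_self_mul_conjTranspose A) _)
  · exact Real.sqrt_nonneg _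

theorem svalue_le_mul_of_forall_abs_le {r : ℝ} (hA : ∀ i j, |A i j| ≤ r) (k : ℕ) :
    svalue A k ≤ r * n := by
  have hrn : 0 ≤ r * n := by
    simpa [mul_comm] using
      Finset.univ.sum_nonneg fun (i : Fin n) _ => (abs_nonneg (A i i)).trans (hA i i)
  refine (svalue_le_sqrt_sum_sq A k).trans (Real.sqrt_le_iff.2 ⟨hrn, ?_⟩)
  calc ∑ i, ∑ j, A i j ^ 2 ≤ ∑ _i : Fin n, ∑ _j : Fin n, r ^ 2 :=
        Finset.sum_le_sum fun i _ => Finset.sum_le_sum fun j _ =>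
          sq_le_sq' (abs_le.1 (hA i j)).1 (abs_le.1 (hA i j)).2
    _ = (r * n) ^ 2 := by
        simp only [Finset.sum_const, Finset.card_univ, Fintype.card_fin, nsmul_eq_mul]
        ring

theorem sqrt_mul_le_svalue_mul_conjTranspose {κ : Type*} [Fintype κ] [DecidableEq κ]
    {X Y : Matrix (Fin n) κ ℝ} {a b : ℝ} (ha : 0 < a) (hb : 0 ≤ b) (hX : a • 1 ≤ Xᴴ * X)
    (hY : b • 1 ≤ Yᴴ * Y) {k : ℕ} (hk : k < Fintype.card κ) :
    √(a * b) ≤ svalue (X * Yᴴ) k := by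
  have hinj := mulVec_injective_of_smul_one_le_conjTranspose_mul_self ha hX
  have hcard := card_le_card_filter_le_eigenvalues (isHermitian_mul_conjTranspose_self (X * Yᴴ))
    hinj (smul_conjTranspose_mul_self_le ha.le hb hX hY)
  have hkn : k < n := by
    simpa using (hk.trans_le hcard).trans_le (Finset.card_le_univ _)
  rw [svalue, dif_pos hkn]
  exact Real.sqrt_le_sqrt ((le_eigsDesc_iff _).2 (hk.trans_le hcard))

end SingularValues

theorem stmt0_general {n d : ℕ} {κ κ' : Type*} [Fintype κ] [Fintype κ'] [DecidableEq κ]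
    [DecidableEq κ'] (hn : 0 < n) (hd : 0 < d)
    {B : Matrix (Fin n) (Fin n) ℝ} {r : ℝ} (hB : ∀ i j, |B i j| ≤ r)
    {μ : Matrix κ (Fin d) ℝ} {ν : Matrix κ' (Fin d) ℝ} {γ γ' : ℝ} (hγ : 0 < γ) (hγ' : 0 < γ')
    (hμ : ∀ (lam : ℝ) (v : Fin d → ℝ), v ≠ 0 → (μᵀ * μ) *ᵥ v = lam • v → γ ≤ lam)
    (hν : ∀ (lam : ℝ) (v : Fin d → ℝ), v ≠ 0 → (νᵀ * ν) *ᵥ v = lam • v → γ' ≤ lam)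
    {τ : Fin n → κ} {τ' : Fin n → κ'} {α α' : ℝ} (hα : 0 < α) (hα' : 0 < α')
    (hτ : ∀ k, α * n ≤ ((Finset.univ.filter fun i => τ i = k).card : ℝ))
    (hτ' : ∀ k, α' * n ≤ ((Finset.univ.filter fun i => τ' i = k).card : ℝ))
    {X Y : Matrix (Fin n) (Fin d) ℝ}
    (hX : ∀ i, X i = μ (τ i)) (hY : ∀ i, Y i = ν (τ' i)) :
    svalue B 0 ≤ r * n ∧ √(α * γ * (α' * γ')) * n ≤ svalue (X * Yᵀ) (d - 1) := by
  refine ⟨svalue_le_mul_of_forall_abs_le hB 0, ?_⟩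
  simp only [← conjTranspose_eq_transpose_of_trivial] at hμ hν ⊢
  have hn' : (0 : ℝ) < n := Nat.cast_pos.2 hn
  have hXX := smul_one_le_conjTranspose_mul_self_of_row_eq (by positivity) hμ hτ hX
  have hYY := smul_one_le_conjTranspose_mul_self_of_row_eq (by positivity) hν hτ' hY
  calc √(α * γ * (α' * γ')) * n = √(α * γ * (α' * γ') * n ^ 2) := by
        rw [Real.sqrt_mul (by positivity) (_ ^ 2), Real.sqrt_sq hn'.le]
    _ = √(α * n * γ * (α' * n * γ')) := by ring_nf
    _ ≤ svalue (X * Yᴴ) (d - 1) :=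
        sqrt_mul_le_svalue_mul_conjTranspose (by positivity) (by positivity) hXX hYY (by simpa)

/-- a matrix with entries in `[0,1]` has largest singular value at most `n`;
and the `d`-th largest singular value of `X * Yᵀ` is at least `α * γ * n`. -/
theorem stmt0 {n K d : ℕ} (hn : 0 < n) (hK : 0 < K) (hd : 0 < d)
    (B : Matrix (Fin n) (Fin n) ℝ) (hB : ∀ i j, B i j ∈ Set.Icc (0 : ℝ) 1)
    (μ ν : Matrix (Fin K) (Fin d) ℝ) (γ : ℝ) (hγ : 0 < γ)
    (hμ : ∀ (lam : ℝ) (v : Fin d → ℝ), v ≠ 0 → (μᵀ * μ) *ᵥ v = lam • v → γ ≤ lam)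
    (hν : ∀ (lam : ℝ) (v : Fin d → ℝ), v ≠ 0 → (νᵀ * ν) *ᵥ v = lam • v → γ ≤ lam)
    (τ : Fin n → Fin K) (α : ℝ) (hα : 0 < α)
    (hτ : ∀ k, α * n ≤ ((Finset.univ.filter fun i => τ i = k).card : ℝ))
    (X Y : Matrix (Fin n) (Fin d) ℝ)
    (hX : ∀ i, X i = μ (τ i)) (hY : ∀ i, Y i = ν (τ i)) :
    svalue B 0 ≤ n ∧ α * γ * n ≤ svalue (X * Yᵀ) (d - 1) := by
  simpa [Real.sqrt_mul_self (mul_pos hα hγ).le] using stmt0_general (r := 1) hn hd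
    (fun i j => (abs_of_nonneg (hB i j).1).trans_le (hB i j).2) hγ hγ hμ hν hα hα hτ hτ hX hY
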